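/- arXiv:1410.6068 — 4 statements merged into one kernel-verified Lean document; each statement's English description precedes it below -/
import Mathlib

section
/- Let w : ℝ → [0,∞) be C¹ with w′ ≥ 0, and let φ : ℝ × ℝ² → ℝ be smooth and such that on every compact time interval the supports of φ(t,·) are contained in a fixed compact subset of ℝ². Set f = −∂_t²φ + Δφ, and for x ≠ 0 write ∂_rφ = (x/|x|)·∇_xφ, ∂_sφ = (1/2)(∂_tφ + ∂_rφ), and (∂_θφ)/r = |x|^{−1}(x₁∂_{x₂}φ − x₂∂_{x₁}φ). Then for every t, (1/2) d/dt ∫_{ℝ²} w(|x|−t) ( (∂_tφ)² + |∇_xφ|² )(t,x) dx + (1/2) ∫_{ℝ²} w′(|x|−t) ( (∂_sφ)² + ((∂_θφ)/r)² )(t,x) dx ≤ ∫_{ℝ²} w(|x|−t) | f ∂_tφ |(t,x) dx. -/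
open MeasureTheory

noncomputable section

/-- partial derivative in the time variable of a function `ℝ → ℝ → ℝ → ℝ` ((t,x₁,x₂) curried). -/
def pdt (φ : ℝ → ℝ → ℝ → ℝ) : ℝ → ℝ → ℝ → ℝ :=
  fun t x y => deriv (fun s => φ s x y) t

/-- partial derivative in the first space variable. -/
def pdx (φ : ℝ → ℝ → ℝ → ℝ) : ℝ → ℝ → ℝ → ℝ :=
  fun t x y => deriv (fun s => φ t s y) x

/-- partial derivative in the second space variable. -/
def pdy (φ : ℝ → ℝ → ℝ → ℝ) : ℝ → ℝ → ℝ → ℝ :=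
  fun t x y => deriv (fun s => φ t x s) y

/-!
Multiplying `□φ` by `∂_tφ` gives the divergence identity
`∂_t (w e) - 2 div (w ∂_tφ ∇φ) = -w' (e + 2 ∂_tφ ∂_rφ) - 2 w □φ ∂_tφ`, where `e = (∂_tφ)² + |∇φ|²`
and `w`, `w'` are taken at `|x| - t`: both `∂_t` and `∂_r` fall on the weight, with opposite signs.
Away from the origin `|∇φ|² = (∂_rφ)² + (∂_θφ / r)²`, so the coefficient of `w'` is the sum of
squares `(∂_tφ + ∂_rφ)² + (∂_θφ / r)²`. Integrating in `x` yields an exact energy identity, which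
`w ≥ 0` and `w' ≥ 0` turn into the inequality.
-/

section General

open Filter Function Set Topology

theorem fderiv_fderiv_apply_comm {E F : Type*} [NormedAddCommGroup E] [NormedSpace ℝ E]
    [NormedAddCommGroup F] [NormedSpace ℝ F] {f : E → F} {p : E} (hf : ContDiffAt ℝ 2 f p)
    (u v : E) :
    fderiv ℝ (fun q => fderiv ℝ f q u) p v = fderiv ℝ (fun q => fderiv ℝ f q v) p u := by
  have hsymm : IsSymmSndFDerivAt ℝ f p := hf.isSymmSndFDerivAt (by simp)
  have hdiff : DifferentiableAt ℝ (fderiv ℝ f) p :=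
    (hf.fderiv_right (m := 1) one_add_one_eq_two.le).differentiableAt one_ne_zero
  rw [fderiv_clm_apply hdiff (by fun_prop), fderiv_clm_apply hdiff (by fun_prop)]
  simpa using hsymm v u

theorem hasDerivAt_integral_of_continuous_of_isCompact {X E : Type*} [TopologicalSpace X]
    [T2Space X] [MeasurableSpace X] [OpensMeasurableSpace X] [NormedAddCommGroup E]
    [NormedSpace ℝ E] [SecondCountableTopologyEither X E] {μ : Measure X}
    [IsFiniteMeasureOnCompacts μ] {K : Set X} (hK : IsCompact K) {G G' : ℝ → X → E} {t : ℝ}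
    (hG : ∀ τ, Continuous (G τ)) (hG' : Continuous ↿G')
    (hderiv : ∀ τ x, HasDerivAt (G · x) (G' τ x) τ)
    (hzero : ∀ᶠ τ in 𝓝 t, ∀ x ∉ K, G τ x = 0) :
    HasDerivAt (fun τ => ∫ x, G τ x ∂μ) (∫ x, G' t x ∂μ) t := by
  obtain ⟨ε, hε, hball⟩ := Metric.eventually_nhds_iff_ball.1 hzero
  obtain ⟨C, hC⟩ := ((isCompact_closedBall t ε).prod hK).exists_bound_of_continuousOn
    hG'.continuousOn
  have hzero' : ∀ τ ∈ Metric.ball t ε, ∀ x ∉ K, G' τ x = 0 := fun τ hτ x hx => by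
    have hloc : (G · x) =ᶠ[𝓝 τ] fun _ => 0 := by
      filter_upwards [Metric.isOpen_ball.mem_nhds hτ] with σ hσ using hball σ hσ x hx
    exact (hderiv τ x).unique ((hasDerivAt_const τ 0).congr_of_eventuallyEq hloc)
  have hbound : ∀ x, ∀ τ ∈ Metric.ball t ε, ‖G' τ x‖ ≤ K.indicator (fun _ => C) x := by
    intro x τ hτ
    by_cases hx : x ∈ K
    · rw [indicator_of_mem hx]
      exact hC (τ, x) ⟨Metric.ball_subset_closedBall hτ, hx⟩
    · rw [indicator_of_notMem hx, hzero' τ hτ x hx, norm_zero]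
  exact (hasDerivAt_integral_of_dominated_loc_of_deriv_le (Metric.ball_mem_nhds t hε)
    (.of_forall fun τ => (hG τ).aestronglyMeasurable)
    ((hG t).integrable_of_hasCompactSupport
      (.intro hK fun x hx => hball t (Metric.mem_ball_self hε) x hx))
    (hG'.comp (.prodMk_right t)).aestronglyMeasurable (.of_forall hbound)
    ((integrable_indicator_iff hK.measurableSet).2 (integrableOn_const hK.measure_lt_top.ne))
    (.of_forall fun x τ _ => hderiv τ x)).2

theorem integral_eq_zero_of_hasDerivAt_fst {Y E : Type*} [MeasurableSpace Y]
    [NormedAddCommGroup E] [NormedSpace ℝ E] {ν : Measure Y} [SFinite ν] {F F' : ℝ × Y → E}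
    (hF : Integrable F (volume.prod ν)) (hF' : Integrable F' (volume.prod ν))
    (hderiv : ∀ᵐ y ∂ν, ∀ x, HasDerivAt (fun s => F (s, y)) (F' (x, y)) x) :
    ∫ p, F' p ∂volume.prod ν = 0 := by
  rw [integral_prod_symm _ hF']
  apply integral_eq_zero_of_ae
  filter_upwards [hF.prod_left_ae, hF'.prod_left_ae, hderiv] with y hFy hF'y hy
  exact integral_eq_zero_of_hasDerivAt_of_integrable hy hF'y hFy

end General

section PartialDerivatives

open Function

variable {φ : ℝ → ℝ → ℝ → ℝ} {m n : WithTop ℕ∞}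

theorem hasDerivAt_fderiv_time {t x y : ℝ} (hφ : DifferentiableAt ℝ ↿φ (t, x, y)) :
    HasDerivAt (fun s => φ s x y) (fderiv ℝ ↿φ (t, x, y) (1, 0, 0)) t :=
  hφ.hasFDerivAt.comp_hasDerivAt (f := fun s => (s, x, y)) t
    ((hasDerivAt_id t).prodMk (hasDerivAt_const t (x, y)))

theorem hasDerivAt_fderiv_fst {t x y : ℝ} (hφ : DifferentiableAt ℝ ↿φ (t, x, y)) :
    HasDerivAt (fun s => φ t s y) (fderiv ℝ ↿φ (t, x, y) (0, 1, 0)) x :=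
  hφ.hasFDerivAt.comp_hasDerivAt (f := fun s => (t, s, y)) x
    ((hasDerivAt_const x t).prodMk ((hasDerivAt_id x).prodMk (hasDerivAt_const x y)))

theorem hasDerivAt_fderiv_snd {t x y : ℝ} (hφ : DifferentiableAt ℝ ↿φ (t, x, y)) :
    HasDerivAt (fun s => φ t x s) (fderiv ℝ ↿φ (t, x, y) (0, 0, 1)) y :=
  hφ.hasFDerivAt.comp_hasDerivAt (f := fun s => (t, x, s)) y
    ((hasDerivAt_const y t).prodMk ((hasDerivAt_const y x).prodMk (hasDerivAt_id y)))

theorem hasDerivAt_pdt (hφ : Differentiable ℝ ↿φ) (t x y : ℝ) :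
    HasDerivAt (fun s => φ s x y) (pdt φ t x y) t :=
  (hasDerivAt_fderiv_time (hφ _)).differentiableAt.hasDerivAt

theorem hasDerivAt_pdx (hφ : Differentiable ℝ ↿φ) (t x y : ℝ) :
    HasDerivAt (fun s => φ t s y) (pdx φ t x y) x :=
  (hasDerivAt_fderiv_fst (hφ _)).differentiableAt.hasDerivAt

theorem hasDerivAt_pdy (hφ : Differentiable ℝ ↿φ) (t x y : ℝ) :
    HasDerivAt (fun s => φ t x s) (pdy φ t x y) y :=
  (hasDerivAt_fderiv_snd (hφ _)).differentiableAt.hasDerivAt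

theorem uncurry_pdt (hφ : Differentiable ℝ ↿φ) : ↿(pdt φ) = fun p => fderiv ℝ ↿φ p (1, 0, 0) :=
  funext fun _ => (hasDerivAt_fderiv_time (hφ _)).deriv

theorem uncurry_pdx (hφ : Differentiable ℝ ↿φ) : ↿(pdx φ) = fun p => fderiv ℝ ↿φ p (0, 1, 0) :=
  funext fun _ => (hasDerivAt_fderiv_fst (hφ _)).deriv

theorem uncurry_pdy (hφ : Differentiable ℝ ↿φ) : ↿(pdy φ) = fun p => fderiv ℝ ↿φ p (0, 0, 1) :=
  funext fun _ => (hasDerivAt_fderiv_snd (hφ _)).deriv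

theorem differentiable_of_contDiff_of_add_one_le {E F : Type*} [NormedAddCommGroup E]
    [NormedSpace ℝ E] [NormedAddCommGroup F] [NormedSpace ℝ F] {f : E → F}
    (hf : ContDiff ℝ n f) (hmn : m + 1 ≤ n) :
    Differentiable ℝ f :=
  (hf.of_le (le_add_self.trans hmn)).differentiable one_ne_zero

theorem contDiff_pdt (hφ : ContDiff ℝ n ↿φ) (hmn : m + 1 ≤ n) : ContDiff ℝ m ↿(pdt φ) := by
  rw [uncurry_pdt (differentiable_of_contDiff_of_add_one_le hφ hmn)]
  exact (hφ.fderiv_right hmn).clm_apply contDiff_const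

theorem contDiff_pdx (hφ : ContDiff ℝ n ↿φ) (hmn : m + 1 ≤ n) : ContDiff ℝ m ↿(pdx φ) := by
  rw [uncurry_pdx (differentiable_of_contDiff_of_add_one_le hφ hmn)]
  exact (hφ.fderiv_right hmn).clm_apply contDiff_const

theorem contDiff_pdy (hφ : ContDiff ℝ n ↿φ) (hmn : m + 1 ≤ n) : ContDiff ℝ m ↿(pdy φ) := by
  rw [uncurry_pdy (differentiable_of_contDiff_of_add_one_le hφ hmn)]
  exact (hφ.fderiv_right hmn).clm_apply contDiff_const

theorem continuous_pdt (hφ : ContDiff ℝ 1 ↿φ) : Continuous ↿(pdt φ) :=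
  (contDiff_pdt (m := 0) hφ (zero_add 1).le).continuous

theorem continuous_pdx (hφ : ContDiff ℝ 1 ↿φ) : Continuous ↿(pdx φ) :=
  (contDiff_pdx (m := 0) hφ (zero_add 1).le).continuous

theorem continuous_pdy (hφ : ContDiff ℝ 1 ↿φ) : Continuous ↿(pdy φ) :=
  (contDiff_pdy (m := 0) hφ (zero_add 1).le).continuous

theorem contDiff_timeSlice (hφ : ContDiff ℝ n ↿φ) (t : ℝ) :
    ContDiff ℝ n fun x : ℝ × ℝ => φ t x.1 x.2 :=
  hφ.comp (contDiff_prodMk_right t)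

theorem pdt_pdx_comm (hφ : ContDiff ℝ 2 ↿φ) : pdt (pdx φ) = pdx (pdt φ) := by
  have hd : Differentiable ℝ ↿φ := hφ.differentiable two_ne_zero
  have htx := (contDiff_pdx hφ one_add_one_eq_two.le).differentiable one_ne_zero
  have hxt := (contDiff_pdt hφ one_add_one_eq_two.le).differentiable one_ne_zero
  funext t x y
  calc pdt (pdx φ) t x y = fderiv ℝ ↿(pdx φ) (t, x, y) (1, 0, 0) :=
        (hasDerivAt_fderiv_time (htx _)).deriv
    _ = fderiv ℝ ↿(pdt φ) (t, x, y) (0, 1, 0) := by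
        rw [uncurry_pdx hd, uncurry_pdt hd, fderiv_fderiv_apply_comm hφ.contDiffAt]
    _ = pdx (pdt φ) t x y := (hasDerivAt_fderiv_fst (hxt _)).deriv.symm

theorem pdt_pdy_comm (hφ : ContDiff ℝ 2 ↿φ) : pdt (pdy φ) = pdy (pdt φ) := by
  have hd : Differentiable ℝ ↿φ := hφ.differentiable two_ne_zero
  have hty := (contDiff_pdy hφ one_add_one_eq_two.le).differentiable one_ne_zero
  have hyt := (contDiff_pdt hφ one_add_one_eq_two.le).differentiable one_ne_zero
  funext t x y
  calc pdt (pdy φ) t x y = fderiv ℝ ↿(pdy φ) (t, x, y) (1, 0, 0) :=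
        (hasDerivAt_fderiv_time (hty _)).deriv
    _ = fderiv ℝ ↿(pdt φ) (t, x, y) (0, 0, 1) := by
        rw [uncurry_pdy hd, uncurry_pdt hd, fderiv_fderiv_apply_comm hφ.contDiffAt]
    _ = pdy (pdt φ) t x y := (hasDerivAt_fderiv_snd (hyt _)).deriv.symm

end PartialDerivatives

section Radius

/-- The Euclidean length `r = |x|` of `x ∈ ℝ²`. The norm that `ℝ × ℝ` carries is the sup norm. -/
def radius (x : ℝ × ℝ) : ℝ :=
  Real.sqrt (x.1 ^ 2 + x.2 ^ 2)

@[fun_prop]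
theorem continuous_radius : Continuous radius := by
  unfold radius
  fun_prop

theorem radius_nonneg (x : ℝ × ℝ) : 0 ≤ radius x :=
  Real.sqrt_nonneg _

theorem radius_swap (x : ℝ × ℝ) : radius x.swap = radius x := by
  simp only [radius, Prod.fst_swap, Prod.snd_swap, add_comm]

theorem sq_radius (x : ℝ × ℝ) : radius x ^ 2 = x.1 ^ 2 + x.2 ^ 2 :=
  Real.sq_sqrt (by positivity)

theorem abs_fst_le_radius (x : ℝ × ℝ) : |x.1| ≤ radius x :=
  Real.abs_le_sqrt (le_add_of_nonneg_right (sq_nonneg x.2))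

theorem abs_snd_le_radius (x : ℝ × ℝ) : |x.2| ≤ radius x :=
  Real.abs_le_sqrt (le_add_of_nonneg_left (sq_nonneg x.1))

theorem norm_le_radius (x : ℝ × ℝ) : ‖x‖ ≤ radius x :=
  max_le (abs_fst_le_radius x) (abs_snd_le_radius x)

theorem radius_ne_zero {x : ℝ × ℝ} (hx : x ≠ 0) : radius x ≠ 0 :=
  ((norm_pos_iff.2 hx).trans_le (norm_le_radius x)).ne'

theorem isCompact_setOf_radius_le (R : ℝ) : IsCompact {x | radius x ≤ R} :=
  (isCompact_closedBall (0 : ℝ × ℝ) R).of_isClosed_subset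
    (isClosed_le continuous_radius continuous_const)
    fun x hx => mem_closedBall_zero_iff.2 ((norm_le_radius x).trans hx)

theorem hasCompactSupport_of_radius_lt {E : Type*} [Zero E] {g : ℝ × ℝ → E} {R : ℝ}
    (hzero : ∀ x, R < radius x → g x = 0) : HasCompactSupport g :=
  .intro (isCompact_setOf_radius_le R) fun x hx => hzero x (not_le.1 hx)

theorem hasDerivAt_radius_fst {x y : ℝ} (hy : y ≠ 0) :
    HasDerivAt (fun s => radius (s, y)) (x / radius (x, y)) x := by
  have hsq : HasDerivAt (fun s : ℝ => s ^ 2 + y ^ 2) (2 * x) x := by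
    simpa using (hasDerivAt_pow 2 x).add_const (y ^ 2)
  exact (hsq.sqrt (by positivity)).congr_deriv (mul_div_mul_left _ _ two_ne_zero)

theorem integrable_fst_div_radius_mul {g : ℝ × ℝ → ℝ} (hg : Integrable g) :
    Integrable fun x => x.1 / radius x * g x :=
  hg.bdd_mul (c := 1)
    (measurable_fst.div continuous_radius.measurable).aestronglyMeasurable <|
    .of_forall fun x => by
      rw [norm_div, Real.norm_of_nonneg (radius_nonneg x)]
      exact div_le_one_of_le₀ (abs_fst_le_radius x) (radius_nonneg x)

theorem integrable_snd_div_radius_mul {g : ℝ × ℝ → ℝ} (hg : Integrable g) :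
    Integrable fun x => x.2 / radius x * g x := by
  simpa only [Function.comp_def, radius_swap, Prod.fst_swap, Prod.swap_swap,
    ← Measure.volume_eq_prod] using
    (integrable_fst_div_radius_mul hg.swap).swap

end Radius

section IntegrationByParts

variable {h : ℝ → ℝ} {ψ ψ₁ ψ₂ : ℝ × ℝ → ℝ}

theorem integrable_radial_mul (hh : Continuous h) (hψ : Continuous ψ)
    (hsupp : HasCompactSupport ψ) : Integrable fun x => h (radius x) * ψ x :=
  Continuous.integrable_of_hasCompactSupport (by fun_prop) hsupp.mul_left

theorem integrable_radial_mul_deriv_fst (hh : Continuous h) (hψ : ContDiff ℝ 1 ψ)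
    (hsupp : HasCompactSupport ψ) :
    Integrable fun x => h (radius x) * deriv (fun s => ψ (s, x.2)) x.1 := by
  have hpartial (x : ℝ × ℝ) : deriv (fun s => ψ (s, x.2)) x.1 = fderiv ℝ ψ x (1, 0) :=
    ((hψ.differentiable one_ne_zero x).hasFDerivAt.comp_hasDerivAt x.1
      ((hasDerivAt_id x.1).prodMk (hasDerivAt_const x.1 x.2))).deriv
  simp only [hpartial]
  exact integrable_radial_mul hh
    ((hψ.continuous_fderiv one_ne_zero).clm_apply continuous_const)
    (hsupp.fderiv_apply ℝ (1, 0))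

theorem integrable_radial_mul_deriv_snd (hh : Continuous h) (hψ : ContDiff ℝ 1 ψ)
    (hsupp : HasCompactSupport ψ) :
    Integrable fun x => h (radius x) * deriv (fun s => ψ (x.1, s)) x.2 := by
  have hswap := (integrable_radial_mul_deriv_fst hh (ψ := ψ ∘ Prod.swap)
    (hψ.comp (contDiff_snd.prodMk contDiff_fst))
    (hsupp.comp_homeomorph (Homeomorph.prodComm ℝ ℝ))).swap
  simp only [Function.comp_def, radius_swap] at hswap
  exact hswap

/-- The radial weight is differentiable along every horizontal line that misses the origin, and
these are almost all of them. -/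
theorem integral_radial_mul_deriv_fst (hh : ContDiff ℝ 1 h) (hψ : ContDiff ℝ 1 ψ)
    (hsupp : HasCompactSupport ψ) :
    ∫ x, h (radius x) * deriv (fun s => ψ (s, x.2)) x.1 =
      -∫ x, x.1 / radius x * (deriv h (radius x) * ψ x) := by
  have hint_weight : Integrable fun x => x.1 / radius x * (deriv h (radius x) * ψ x) :=
    integrable_fst_div_radius_mul
      (integrable_radial_mul (hh.continuous_deriv le_rfl) hψ.continuous hsupp)
  have hint_deriv := integrable_radial_mul_deriv_fst hh.continuous hψ hsupp
  have hderiv : ∀ᵐ y : ℝ, ∀ x, HasDerivAt (fun s => h (radius (s, y)) * ψ (s, y))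
      (x / radius (x, y) * (deriv h (radius (x, y)) * ψ (x, y)) +
        h (radius (x, y)) * deriv (fun s => ψ (s, y)) x) x := by
    filter_upwards [Measure.ae_ne volume 0] with y hy x
    have hweight := (hh.differentiable one_ne_zero _).hasDerivAt.comp x
      (hasDerivAt_radius_fst (x := x) hy)
    have hfield : HasDerivAt (fun s => ψ (s, y)) (deriv (fun s => ψ (s, y)) x) x :=
      ((hψ.differentiable one_ne_zero).comp
        (differentiable_id.prodMk (differentiable_const y)) x).hasDerivAt
    exact (hweight.mul hfield).congr_deriv (by simp only [Function.comp_apply]; ring)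
  rw [eq_neg_iff_add_eq_zero, add_comm, ← integral_add hint_weight hint_deriv]
  exact integral_eq_zero_of_hasDerivAt_fst
    (integrable_radial_mul hh.continuous hψ.continuous hsupp) (hint_weight.add hint_deriv) hderiv

theorem integral_radial_mul_deriv_snd (hh : ContDiff ℝ 1 h) (hψ : ContDiff ℝ 1 ψ)
    (hsupp : HasCompactSupport ψ) :
    ∫ x, h (radius x) * deriv (fun s => ψ (x.1, s)) x.2 =
      -∫ x, x.2 / radius x * (deriv h (radius x) * ψ x) := by
  have hswap := integral_radial_mul_deriv_fst hh (ψ := ψ ∘ Prod.swap)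
    (hψ.comp (contDiff_snd.prodMk contDiff_fst))
    (hsupp.comp_homeomorph (Homeomorph.prodComm ℝ ℝ))
  rw [Measure.volume_eq_prod, ← integral_prod_swap, ← integral_prod_swap (fun x => _ / _ * _)]
  simp only [radius_swap]
  exact hswap

theorem integrable_radial_mul_radialComponent (hh : Continuous h) (hψ₁ : Continuous ψ₁)
    (hψ₂ : Continuous ψ₂) (hsupp₁ : HasCompactSupport ψ₁) (hsupp₂ : HasCompactSupport ψ₂) :
    Integrable fun x => h (radius x) * ((x.1 * ψ₁ x + x.2 * ψ₂ x) / radius x) :=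
  ((integrable_fst_div_radius_mul (integrable_radial_mul hh hψ₁ hsupp₁)).add
    (integrable_snd_div_radius_mul (integrable_radial_mul hh hψ₂ hsupp₂))).congr
    (.of_forall fun x => by simp only [Pi.add_apply]; ring)

theorem integral_radial_mul_divergence (hh : ContDiff ℝ 1 h) (hψ₁ : ContDiff ℝ 1 ψ₁)
    (hψ₂ : ContDiff ℝ 1 ψ₂) (hsupp₁ : HasCompactSupport ψ₁) (hsupp₂ : HasCompactSupport ψ₂) :
    ∫ x, h (radius x) *
        (deriv (fun s => ψ₁ (s, x.2)) x.1 + deriv (fun s => ψ₂ (x.1, s)) x.2) =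
      -∫ x, deriv h (radius x) * ((x.1 * ψ₁ x + x.2 * ψ₂ x) / radius x) := by
  have hh' := hh.continuous_deriv le_rfl
  calc ∫ x, h (radius x) *
        (deriv (fun s => ψ₁ (s, x.2)) x.1 + deriv (fun s => ψ₂ (x.1, s)) x.2)
      = (∫ x, h (radius x) * deriv (fun s => ψ₁ (s, x.2)) x.1) +
          ∫ x, h (radius x) * deriv (fun s => ψ₂ (x.1, s)) x.2 := by
        simp only [mul_add]
        exact integral_add (integrable_radial_mul_deriv_fst hh.continuous hψ₁ hsupp₁)
          (integrable_radial_mul_deriv_snd hh.continuous hψ₂ hsupp₂)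
    _ = -∫ x, (x.1 / radius x * (deriv h (radius x) * ψ₁ x) +
          x.2 / radius x * (deriv h (radius x) * ψ₂ x)) := by
        rw [integral_radial_mul_deriv_fst hh hψ₁ hsupp₁,
          integral_radial_mul_deriv_snd hh hψ₂ hsupp₂, ← neg_add, integral_add
            (integrable_fst_div_radius_mul (integrable_radial_mul hh' hψ₁.continuous hsupp₁))
            (integrable_snd_div_radius_mul (integrable_radial_mul hh' hψ₂.continuous hsupp₂))]
    _ = -∫ x, deriv h (radius x) * ((x.1 * ψ₁ x + x.2 * ψ₂ x) / radius x) := by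
        congr 2 with x
        ring

end IntegrationByParts

section Vanishing

open Filter Topology

/-- `φ(τ, ·)` is supported in the disc of radius `R` about the origin for all `τ` near `t`. An open
condition in time is used so that it passes to `∂_tφ`. -/
def VanishesOutside (R t : ℝ) (φ : ℝ → ℝ → ℝ → ℝ) : Prop :=
  ∀ᶠ τ in 𝓝 t, ∀ x : ℝ × ℝ, R < radius x → φ τ x.1 x.2 = 0

variable {φ : ℝ → ℝ → ℝ → ℝ} {R t : ℝ}

theorem vanishesOutside_of_forall_mem_Icc {a b : ℝ} (hat : a < t) (htb : t < b)
    (hφ : ∀ τ ∈ Set.Icc a b, ∀ x₁ x₂ : ℝ, R < Real.sqrt (x₁ ^ 2 + x₂ ^ 2) → φ τ x₁ x₂ = 0) :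
    VanishesOutside R t φ :=
  mem_of_superset (Icc_mem_nhds hat htb) fun τ hτ x => hφ τ hτ x.1 x.2

theorem vanishesOutside_pdt (hφ : VanishesOutside R t φ) : VanishesOutside R t (pdt φ) := by
  filter_upwards [eventually_eventually_nhds.2 hφ] with τ hτ x hx
  have hloc : (fun s => φ s x.1 x.2) =ᶠ[𝓝 τ] fun _ => 0 := hτ.mono fun s hs => hs x hx
  exact hloc.deriv_eq.trans (deriv_const τ 0)

theorem vanishesOutside_pdx (hφ : VanishesOutside R t φ) : VanishesOutside R t (pdx φ) := by
  filter_upwards [hφ] with τ hτ x hx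
  have hrad : Continuous fun s => radius (s, x.2) := by fun_prop
  have hloc : (fun s => φ τ s x.2) =ᶠ[𝓝 x.1] fun _ => 0 :=
    (hrad.continuousAt.eventually (lt_mem_nhds hx)).mono fun s hs => hτ (s, x.2) hs
  exact hloc.deriv_eq.trans (deriv_const x.1 0)

theorem vanishesOutside_pdy (hφ : VanishesOutside R t φ) : VanishesOutside R t (pdy φ) := by
  filter_upwards [hφ] with τ hτ x hx
  have hrad : Continuous fun s => radius (x.1, s) := by fun_prop
  have hloc : (fun s => φ τ x.1 s) =ᶠ[𝓝 x.2] fun _ => 0 :=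
    (hrad.continuousAt.eventually (lt_mem_nhds hx)).mono fun s hs => hτ (x.1, s) hs
  exact hloc.deriv_eq.trans (deriv_const x.2 0)

theorem VanishesOutside.hasCompactSupport (hφ : VanishesOutside R t φ) :
    HasCompactSupport fun x : ℝ × ℝ => φ t x.1 x.2 :=
  hasCompactSupport_of_radius_lt hφ.self_of_nhds

end Vanishing

section Energy

open Function

/-- The radial derivative `∂_rφ = (x / |x|) · ∇φ`, with junk value `0` at the origin. -/
def radialDeriv (φ : ℝ → ℝ → ℝ → ℝ) (t : ℝ) (x : ℝ × ℝ) : ℝ :=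
  (x.1 * pdx φ t x.1 x.2 + x.2 * pdy φ t x.1 x.2) / radius x

/-- The normalized angular derivative `(∂_θφ) / r`, with junk value `0` at the origin. -/
def angularDeriv (φ : ℝ → ℝ → ℝ → ℝ) (t : ℝ) (x : ℝ × ℝ) : ℝ :=
  (x.1 * pdy φ t x.1 x.2 - x.2 * pdx φ t x.1 x.2) / radius x

/-- The flat wave operator `□φ = -∂_t²φ + Δφ`. -/
def waveOperator (φ : ℝ → ℝ → ℝ → ℝ) (t : ℝ) (x : ℝ × ℝ) : ℝ :=
  -pdt (pdt φ) t x.1 x.2 + pdx (pdx φ) t x.1 x.2 + pdy (pdy φ) t x.1 x.2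

/-- Twice the usual energy density: `(∂_tφ)² + |∇φ|²`. -/
def energyDensity (φ : ℝ → ℝ → ℝ → ℝ) (t : ℝ) (x : ℝ × ℝ) : ℝ :=
  pdt φ t x.1 x.2 ^ 2 + pdx φ t x.1 x.2 ^ 2 + pdy φ t x.1 x.2 ^ 2

/-- The divergence of the momentum density `∂_tφ ∇φ`, expanded by the product rule. -/
def momentumDivergence (φ : ℝ → ℝ → ℝ → ℝ) (t : ℝ) (x : ℝ × ℝ) : ℝ :=
  (pdx (pdx φ) t x.1 x.2 * pdt φ t x.1 x.2 + pdx φ t x.1 x.2 * pdx (pdt φ) t x.1 x.2) +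
    (pdy (pdy φ) t x.1 x.2 * pdt φ t x.1 x.2 + pdy φ t x.1 x.2 * pdy (pdt φ) t x.1 x.2)

/-- Twice the energy at time `t`, weighted by `w` of the null coordinate `q = |x| - t`. -/
def weightedEnergy (w : ℝ → ℝ) (φ : ℝ → ℝ → ℝ → ℝ) (t : ℝ) : ℝ :=
  ∫ x, w (radius x - t) * energyDensity φ t x

/-- The sum of squares `(∂_tφ + ∂_rφ)² + ((∂_θφ) / r)²` of the derivatives tangent to forward light
cones, where `∂_tφ + ∂_rφ = 2 ∂_sφ`. -/
def nullEnergyDensity (φ : ℝ → ℝ → ℝ → ℝ) (t : ℝ) (x : ℝ × ℝ) : ℝ :=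
  (pdt φ t x.1 x.2 + radialDeriv φ t x) ^ 2 + angularDeriv φ t x ^ 2

variable {w : ℝ → ℝ} {φ : ℝ → ℝ → ℝ → ℝ} {R t : ℝ}

theorem radialDeriv_sq_add_angularDeriv_sq (φ : ℝ → ℝ → ℝ → ℝ) (t : ℝ) {x : ℝ × ℝ} (hx : x ≠ 0) :
    radialDeriv φ t x ^ 2 + angularDeriv φ t x ^ 2 =
      pdx φ t x.1 x.2 ^ 2 + pdy φ t x.1 x.2 ^ 2 := by
  simp only [radialDeriv, angularDeriv, div_pow, ← add_div]
  rw [div_eq_iff (pow_ne_zero 2 (radius_ne_zero hx)), sq_radius]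
  ring

theorem hasDerivAt_energyDensity (hφ : ContDiff ℝ 2 ↿φ) (t : ℝ) (x : ℝ × ℝ) :
    HasDerivAt (fun τ => energyDensity φ τ x)
      (2 * (momentumDivergence φ t x - waveOperator φ t x * pdt φ t x.1 x.2)) t := by
  have ht := hasDerivAt_pdt
    ((contDiff_pdt hφ one_add_one_eq_two.le).differentiable one_ne_zero) t x.1 x.2
  have hx := hasDerivAt_pdt
    ((contDiff_pdx hφ one_add_one_eq_two.le).differentiable one_ne_zero) t x.1 x.2
  have hy := hasDerivAt_pdt
    ((contDiff_pdy hφ one_add_one_eq_two.le).differentiable one_ne_zero) t x.1 x.2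
  rw [pdt_pdx_comm hφ] at hx
  rw [pdt_pdy_comm hφ] at hy
  refine (((ht.pow 2).add (hx.pow 2)).add (hy.pow 2)).congr_deriv ?_
  simp only [momentumDivergence, waveOperator]
  ring

theorem continuous_energyDensity (hφ : ContDiff ℝ 1 ↿φ) : Continuous ↿(energyDensity φ) := by
  have ht := continuous_pdt hφ
  have hx := continuous_pdx hφ
  have hy := continuous_pdy hφ
  exact ((ht.pow 2).add (hx.pow 2)).add (hy.pow 2)

theorem continuous_waveOperator (hφ : ContDiff ℝ 2 ↿φ) : Continuous ↿(waveOperator φ) := by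
  have htt := continuous_pdt (contDiff_pdt hφ one_add_one_eq_two.le)
  have hxx := continuous_pdx (contDiff_pdx hφ one_add_one_eq_two.le)
  have hyy := continuous_pdy (contDiff_pdy hφ one_add_one_eq_two.le)
  exact (htt.neg.add hxx).add hyy

theorem continuous_momentumDivergence (hφ : ContDiff ℝ 2 ↿φ) :
    Continuous ↿(momentumDivergence φ) := by
  have ht := contDiff_pdt hφ one_add_one_eq_two.le
  have hx := contDiff_pdx hφ one_add_one_eq_two.le
  have hy := contDiff_pdy hφ one_add_one_eq_two.le
  have htx := continuous_pdx ht
  have hty := continuous_pdy ht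
  have hxx := continuous_pdx hx
  have hyy := continuous_pdy hy
  exact ((hxx.mul ht.continuous).add (hx.continuous.mul htx)).add
    ((hyy.mul ht.continuous).add (hy.continuous.mul hty))

theorem energyDensity_eventually_eq_zero (hvan : VanishesOutside R t φ) :
    ∀ᶠ τ in nhds t, ∀ x, R < radius x → energyDensity φ τ x = 0 := by
  filter_upwards [vanishesOutside_pdt hvan, vanishesOutside_pdx hvan, vanishesOutside_pdy hvan]
    with τ ht hx hy x hR
  simp [energyDensity, ht x hR, hx x hR, hy x hR]

theorem hasDerivAt_weightedEnergy (hw : ContDiff ℝ 1 w) (hφ : ContDiff ℝ 2 ↿φ)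
    (hvan : VanishesOutside R t φ) :
    HasDerivAt (weightedEnergy w φ)
      (∫ x, (-deriv w (radius x - t) * energyDensity φ t x + w (radius x - t) *
        (2 * (momentumDivergence φ t x - waveOperator φ t x * pdt φ t x.1 x.2)))) t := by
  have hwc := hw.continuous
  have hw'c : Continuous (deriv w) := hw.continuous_deriv le_rfl
  have he := continuous_energyDensity (hφ.of_le one_le_two)
  have hdiv := continuous_momentumDivergence hφ
  have hbox := continuous_waveOperator hφ
  have hpdt := (contDiff_pdt hφ one_add_one_eq_two.le).continuous
  have hq : Continuous fun p : ℝ × ℝ × ℝ => radius p.2 - p.1 := by fun_prop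
  refine hasDerivAt_integral_of_continuous_of_isCompact
    (G := fun τ x => w (radius x - τ) * energyDensity φ τ x)
    (G' := fun τ x => -deriv w (radius x - τ) * energyDensity φ τ x + w (radius x - τ) *
        (2 * (momentumDivergence φ τ x - waveOperator φ τ x * pdt φ τ x.1 x.2)))
    (isCompact_setOf_radius_le R) (fun τ => ?_) ?_ (fun τ x => ?_) ?_
  · exact ((hwc.comp hq).mul he).comp (.prodMk_right τ)
  · exact ((hw'c.comp hq).neg.mul he).add
      ((hwc.comp hq).mul (continuous_const.mul (hdiv.sub (hbox.mul hpdt))))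
  · have hweight : HasDerivAt (fun s => w (radius x - s)) (-deriv w (radius x - τ)) τ :=
      (hw.differentiable one_ne_zero _).hasDerivAt.comp_const_sub (radius x) τ
    exact hweight.mul (hasDerivAt_energyDensity hφ τ x)
  · filter_upwards [energyDensity_eventually_eq_zero hvan] with τ hτ x hx
    rw [hτ x (not_le.1 hx), mul_zero]

theorem integrable_weight_mul_energyDensity (hw : Continuous w) (hφ : ContDiff ℝ 1 ↿φ)
    (hvan : VanishesOutside R t φ) :
    Integrable fun x => w (radius x - t) * energyDensity φ t x :=
  integrable_radial_mul (h := fun q => w (q - t)) (by fun_prop)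
    ((continuous_energyDensity hφ).comp (.prodMk_right t))
    (hasCompactSupport_of_radius_lt (energyDensity_eventually_eq_zero hvan).self_of_nhds)

theorem integrable_weight_mul_waveOperator_mul_pdt (hw : Continuous w) (hφ : ContDiff ℝ 2 ↿φ)
    (hvan : VanishesOutside R t φ) :
    Integrable fun x => w (radius x - t) * (waveOperator φ t x * pdt φ t x.1 x.2) :=
  integrable_radial_mul (h := fun q => w (q - t)) (by fun_prop)
    (((continuous_waveOperator hφ).mul (continuous_pdt (hφ.of_le one_le_two))).comp
      (.prodMk_right t))
    (vanishesOutside_pdt hvan).hasCompactSupport.mul_left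

theorem integrable_weight_mul_momentumDivergence (hw : Continuous w) (hφ : ContDiff ℝ 2 ↿φ)
    (hvan : VanishesOutside R t φ) :
    Integrable fun x => w (radius x - t) * momentumDivergence φ t x :=
  integrable_radial_mul (h := fun q => w (q - t)) (by fun_prop)
    ((continuous_momentumDivergence hφ).comp (.prodMk_right t))
    (((vanishesOutside_pdt hvan).hasCompactSupport.mul_left.add
      (vanishesOutside_pdx hvan).hasCompactSupport.mul_right).add
      ((vanishesOutside_pdt hvan).hasCompactSupport.mul_left.add
        (vanishesOutside_pdy hvan).hasCompactSupport.mul_right))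

theorem pdt_mul_radialDeriv (φ : ℝ → ℝ → ℝ → ℝ) (t : ℝ) (x : ℝ × ℝ) :
    pdt φ t x.1 x.2 * radialDeriv φ t x =
      (x.1 * (pdx φ t x.1 x.2 * pdt φ t x.1 x.2) + x.2 * (pdy φ t x.1 x.2 * pdt φ t x.1 x.2)) /
        radius x := by
  rw [radialDeriv]
  ring

theorem integrable_weight_mul_pdt_mul_radialDeriv (hw : Continuous w) (hφ : ContDiff ℝ 1 ↿φ)
    (hvan : VanishesOutside R t φ) :
    Integrable fun x => w (radius x - t) * (pdt φ t x.1 x.2 * radialDeriv φ t x) := by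
  simp only [pdt_mul_radialDeriv]
  exact integrable_radial_mul_radialComponent (h := fun q => w (q - t)) (by fun_prop)
    (((continuous_pdx hφ).mul (continuous_pdt hφ)).comp (.prodMk_right t))
    (((continuous_pdy hφ).mul (continuous_pdt hφ)).comp (.prodMk_right t))
    (vanishesOutside_pdt hvan).hasCompactSupport.mul_left
    (vanishesOutside_pdt hvan).hasCompactSupport.mul_left

theorem integral_weight_mul_momentumDivergence (hw : ContDiff ℝ 1 w) (hφ : ContDiff ℝ 2 ↿φ)
    (hvan : VanishesOutside R t φ) :
    ∫ x, w (radius x - t) * momentumDivergence φ t x =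
      -∫ x, deriv w (radius x - t) * (pdt φ t x.1 x.2 * radialDeriv φ t x) := by
  have ht := contDiff_pdt hφ one_add_one_eq_two.le
  have hx := contDiff_pdx hφ one_add_one_eq_two.le
  have hy := contDiff_pdy hφ one_add_one_eq_two.le
  have hsupp := (vanishesOutside_pdt hvan).hasCompactSupport
  have hdt := ht.differentiable one_ne_zero
  have hdiv (x : ℝ × ℝ) : momentumDivergence φ t x =
      deriv (fun s => pdx φ t s x.2 * pdt φ t s x.2) x.1 +
        deriv (fun s => pdy φ t x.1 s * pdt φ t x.1 s) x.2 :=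
    (congrArg₂ (· + ·)
      ((hasDerivAt_pdx (hx.differentiable one_ne_zero) t x.1 x.2).mul
        (hasDerivAt_pdx hdt t x.1 x.2)).deriv
      ((hasDerivAt_pdy (hy.differentiable one_ne_zero) t x.1 x.2).mul
        (hasDerivAt_pdy hdt t x.1 x.2)).deriv).symm
  have hparts := integral_radial_mul_divergence (h := fun q => w (q - t))
    (hw.comp (contDiff_id.sub contDiff_const))
    ((contDiff_timeSlice hx t).mul (contDiff_timeSlice ht t))
    ((contDiff_timeSlice hy t).mul (contDiff_timeSlice ht t)) hsupp.mul_left hsupp.mul_left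
  simpa only [hdiv, pdt_mul_radialDeriv, deriv_comp_sub_const] using hparts

theorem deriv_weightedEnergy (hw : ContDiff ℝ 1 w) (hφ : ContDiff ℝ 2 ↿φ)
    (hvan : VanishesOutside R t φ) :
    deriv (weightedEnergy w φ) t =
      2 * ((∫ x, w (radius x - t) * momentumDivergence φ t x) -
          ∫ x, w (radius x - t) * (waveOperator φ t x * pdt φ t x.1 x.2)) -
        ∫ x, deriv w (radius x - t) * energyDensity φ t x := by
  have he := integrable_weight_mul_energyDensity (hw.continuous_deriv le_rfl)
    (hφ.of_le one_le_two) hvan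
  have hdiv := integrable_weight_mul_momentumDivergence hw.continuous hφ hvan
  have hbox := integrable_weight_mul_waveOperator_mul_pdt hw.continuous hφ hvan
  have hsplit := integral_sub ((hdiv.sub hbox).const_mul 2) he
  rw [integral_const_mul, integral_sub' hdiv hbox] at hsplit
  rw [(hasDerivAt_weightedEnergy hw hφ hvan).deriv, ← hsplit]
  congr 1 with x
  simp only [Pi.sub_apply]
  ring

theorem nullEnergyDensity_eq (φ : ℝ → ℝ → ℝ → ℝ) (t : ℝ) {x : ℝ × ℝ} (hx : x ≠ 0) :
    nullEnergyDensity φ t x =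
      energyDensity φ t x + 2 * (pdt φ t x.1 x.2 * radialDeriv φ t x) := by
  rw [nullEnergyDensity, energyDensity]
  linear_combination radialDeriv_sq_add_angularDeriv_sq φ t hx

theorem weight_mul_nullEnergyDensity_ae_eq (w : ℝ → ℝ) (φ : ℝ → ℝ → ℝ → ℝ) (t : ℝ) :
    (fun x => w (radius x - t) * nullEnergyDensity φ t x) =ᵐ[volume]
      fun x => w (radius x - t) * energyDensity φ t x +
        2 * (w (radius x - t) * (pdt φ t x.1 x.2 * radialDeriv φ t x)) := by
  filter_upwards [Measure.ae_ne volume 0] with x hx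
  rw [nullEnergyDensity_eq φ t hx]
  ring

theorem integrable_weight_mul_nullEnergyDensity (hw : Continuous w) (hφ : ContDiff ℝ 1 ↿φ)
    (hvan : VanishesOutside R t φ) :
    Integrable fun x => w (radius x - t) * nullEnergyDensity φ t x :=
  ((integrable_weight_mul_energyDensity hw hφ hvan).add
    ((integrable_weight_mul_pdt_mul_radialDeriv hw hφ hvan).const_mul 2)).congr
    (weight_mul_nullEnergyDensity_ae_eq w φ t).symm

theorem integral_weight_mul_nullEnergyDensity (hw : Continuous w) (hφ : ContDiff ℝ 1 ↿φ)
    (hvan : VanishesOutside R t φ) :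
    ∫ x, w (radius x - t) * nullEnergyDensity φ t x =
      (∫ x, w (radius x - t) * energyDensity φ t x) +
        2 * ∫ x, w (radius x - t) * (pdt φ t x.1 x.2 * radialDeriv φ t x) := by
  rw [integral_congr_ae (weight_mul_nullEnergyDensity_ae_eq w φ t),
    integral_add (integrable_weight_mul_energyDensity hw hφ hvan)
      ((integrable_weight_mul_pdt_mul_radialDeriv hw hφ hvan).const_mul 2),
    integral_const_mul]

theorem weightedEnergy_identity (hw : ContDiff ℝ 1 w) (hφ : ContDiff ℝ 2 ↿φ)
    (hvan : VanishesOutside R t φ) :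
    deriv (weightedEnergy w φ) t + ∫ x, deriv w (radius x - t) * nullEnergyDensity φ t x =
      -2 * ∫ x, w (radius x - t) * (waveOperator φ t x * pdt φ t x.1 x.2) := by
  rw [deriv_weightedEnergy hw hφ hvan, integral_weight_mul_momentumDivergence hw hφ hvan,
    integral_weight_mul_nullEnergyDensity (hw.continuous_deriv le_rfl) (hφ.of_le one_le_two) hvan]
  ring

theorem stmt1_general (hw : ContDiff ℝ 1 w) (hw0 : ∀ q, 0 ≤ w q) (hw' : ∀ q, 0 ≤ deriv w q)
    (hφ : ContDiff ℝ 2 ↿φ) (hvan : VanishesOutside R t φ) :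
    (1/2) * deriv (weightedEnergy w φ) t
      + (1/2) * ∫ x, deriv w (radius x - t) *
          (((1/2) * (pdt φ t x.1 x.2 + radialDeriv φ t x)) ^ 2 + angularDeriv φ t x ^ 2)
      ≤ ∫ x, w (radius x - t) * |waveOperator φ t x * pdt φ t x.1 x.2| := by
  have htangential : ∫ x, deriv w (radius x - t) *
        (((1/2) * (pdt φ t x.1 x.2 + radialDeriv φ t x)) ^ 2 + angularDeriv φ t x ^ 2) ≤
      ∫ x, deriv w (radius x - t) * nullEnergyDensity φ t x := by
    refine integral_mono_of_nonneg (.of_forall fun x => mul_nonneg (hw' _) (by positivity))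
      (integrable_weight_mul_nullEnergyDensity (hw.continuous_deriv le_rfl)
        (hφ.of_le one_le_two) hvan)
      (.of_forall fun x => mul_le_mul_of_nonneg_left ?_ (hw' _))
    rw [nullEnergyDensity]
    linarith [sq_nonneg (pdt φ t x.1 x.2 + radialDeriv φ t x)]
  have hsource : -∫ x, w (radius x - t) * (waveOperator φ t x * pdt φ t x.1 x.2) ≤
      ∫ x, w (radius x - t) * |waveOperator φ t x * pdt φ t x.1 x.2| := by
    refine (neg_le_abs _).trans (abs_integral_le_integral_abs.trans_eq ?_)
    simp only [abs_mul, abs_of_nonneg (hw0 _)]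
  linarith [weightedEnergy_identity hw hφ hvan]

end Energy

/-- Weighted energy estimate for the flat wave operator `□ = −∂_t² + Δ` on `ℝ^{2+1}`
(Proposition `energy` of the paper), with weight function `w` of the null coordinate
`q = |x| − t`. -/
theorem stmt1 (w : ℝ → ℝ) (hw : ContDiff ℝ 1 w) (hw0 : ∀ q : ℝ, 0 ≤ w q)
    (hw' : ∀ q : ℝ, 0 ≤ deriv w q)
    (φ : ℝ → ℝ → ℝ → ℝ)
    (hφ : ContDiff ℝ (⊤ : ℕ∞) (fun p : ℝ × ℝ × ℝ => φ p.1 p.2.1 p.2.2))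
    -- on every compact time interval the supports of φ(t,·) lie in a fixed compact set
    (hsupp : ∀ a b : ℝ, ∃ R : ℝ, ∀ t ∈ Set.Icc a b, ∀ x₁ x₂ : ℝ,
        R < Real.sqrt (x₁^2 + x₂^2) → φ t x₁ x₂ = 0) :
    ∀ t : ℝ,
      (1/2) * deriv (fun τ => ∫ x : ℝ × ℝ,
          w (Real.sqrt (x.1^2 + x.2^2) - τ) *
            ((pdt φ τ x.1 x.2)^2 + (pdx φ τ x.1 x.2)^2 + (pdy φ τ x.1 x.2)^2)) t
      + (1/2) * ∫ x : ℝ × ℝ,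
          deriv w (Real.sqrt (x.1^2 + x.2^2) - t) *
            (((1/2) * (pdt φ t x.1 x.2
                + (x.1 * pdx φ t x.1 x.2 + x.2 * pdy φ t x.1 x.2)
                    / Real.sqrt (x.1^2 + x.2^2)))^2
             + ((x.1 * pdy φ t x.1 x.2 - x.2 * pdx φ t x.1 x.2)
                    / Real.sqrt (x.1^2 + x.2^2))^2)
      ≤ ∫ x : ℝ × ℝ,
          w (Real.sqrt (x.1^2 + x.2^2) - t) *
            |(- pdt (pdt φ) t x.1 x.2 + pdx (pdx φ) t x.1 x.2 + pdy (pdy φ) t x.1 x.2)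
              * pdt φ t x.1 x.2| := by
  intro t
  obtain ⟨R, hR⟩ := hsupp (t - 1) (t + 1)
  exact stmt1_general hw hw0 hw' (hφ.of_le (WithTop.coe_le_coe.2 le_top))
    (vanishesOutside_of_forall_mem_Icc (sub_one_lt t) (lt_add_one t) hR)
end
end

section
/- Let b : [0,∞) → ℝ be continuous, let x ∈ ℝ² with r = |x| > 0, and let ρ > 0. Then ∫_{S¹} b(|x + ρω|) dω = 4 ∫_{|ρ−r|}^{ρ+r} λ b(λ) h(λ,ρ,r) dλ, where the left-hand integral is with respect to arclength measure on the unit circle S¹ ⊂ ℝ², and h(λ,ρ,r) = (λ² − (ρ−r)²)^{−1/2} ((ρ+r)² − λ²)^{−1/2}. Moreover, for |ρ−r| < λ < ρ+r one has the algebraic identity h(λ,ρ,r) = ((λ+r)² − ρ²)^{−1/2} (ρ² − (λ−r)²)^{−1/2}. -/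
open MeasureTheory

noncomputable section

/-- the kernel `h(λ,ρ,r) = (λ²−(ρ−r)²)^{−1/2} ((ρ+r)²−λ²)^{−1/2}`. -/
def hker (lam ρ r : ℝ) : ℝ :=
  (Real.sqrt (lam^2 - (ρ - r)^2))⁻¹ * (Real.sqrt ((ρ + r)^2 - lam^2))⁻¹

/-!
Writing `x` in polar coordinates, `|x + ρω|² = r² + ρ² + 2rρ cos t`, where `t` is the angle from
`x` to `ω`; by rotation and reflection the circle integral is twice the integral over `t ∈ [0, π]`.
Conversely `t = arccos ((λ² - ρ² - r²) / (2ρr))` decreases from `π` to `0` as `λ` runs from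
`|ρ - r|` to `ρ + r`, and `2λ h(λ, ρ, r)` is exactly `-dt/dλ`, so the formula is the substitution
`t = t(λ)`. The singularities of `h` at the endpoints are those of the derivative of `arccos` at
`±1`.
-/

section CircleIntegral

open Real

variable {E : Type*} [NormedAddCommGroup E] [NormedSpace ℝ E]

lemma intervalIntegral_neg_self_of_even {g : ℝ → E} (hg : g.Even) (a : ℝ) :
    ∫ t in -a..a, g t = (2 : ℝ) • ∫ t in 0..a, g t := by
  by_cases hg_int : IntervalIntegrable g volume 0 a
  · have hg_int_neg : IntervalIntegrable g volume (-a) 0 := by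
      simpa only [hg _, neg_zero] using ((IntervalIntegrable.iff_comp_neg).1 hg_int).symm
    have hreflect : ∫ t in -a..0, g t = ∫ t in 0..a, g t := by
      simpa only [hg _, neg_zero] using
        (intervalIntegral.integral_comp_neg (a := 0) (b := a) g).symm
    rw [← intervalIntegral.integral_add_adjacent_intervals hg_int_neg hg_int, hreflect, two_smul]
  · -- Neither integral exists, so both sides are `0`.
    have hg_not_int : ¬IntervalIntegrable g volume (-a) a := fun h ↦
      hg_int <| h.mono_set <| Set.uIcc_subset_uIcc (by simp [Set.mem_uIcc, le_total]) (by simp)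
    rw [intervalIntegral.integral_undef hg_int, intervalIntegral.integral_undef hg_not_int,
      smul_zero]

lemma intervalIntegral_comp_cos_sub (G : ℝ → E) (φ : ℝ) :
    ∫ θ in 0..2 * π, G (cos (θ - φ)) = (2 : ℝ) • ∫ t in 0..π, G (cos t) := by
  have hperiodic : Function.Periodic (fun t ↦ G (cos t)) (2 * π) := fun t ↦ by
    simp only [cos_add_two_pi]
  have heven : Function.Even fun t ↦ G (cos t) := fun t ↦ by simp only [cos_neg]
  calc ∫ θ in 0..2 * π, G (cos (θ - φ))
    _ = ∫ t in -φ..-φ + 2 * π, G (cos t) := by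
      rw [intervalIntegral.integral_comp_sub_right (fun t ↦ G (cos t)), zero_sub, neg_add_eq_sub]
    _ = ∫ t in -π..-π + 2 * π, G (cos t) := hperiodic.intervalIntegral_add_eq _ _
    _ = ∫ t in -π..π, G (cos t) := by ring_nf
    _ = (2 : ℝ) • ∫ t in 0..π, G (cos t) := intervalIntegral_neg_self_of_even heven π

lemma exists_eq_sqrt_mul_cos_sin (x₁ x₂ : ℝ) :
    ∃ φ, x₁ = √(x₁ ^ 2 + x₂ ^ 2) * cos φ ∧ x₂ = √(x₁ ^ 2 + x₂ ^ 2) * sin φ := by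
  have hnorm : ‖(⟨x₁, x₂⟩ : ℂ)‖ = √(x₁ ^ 2 + x₂ ^ 2) := by
    rw [Complex.norm_eq_sqrt_sq_add_sq]
  refine ⟨Complex.arg ⟨x₁, x₂⟩, ?_, ?_⟩
  · rw [← hnorm, Complex.norm_mul_cos_arg]
  · rw [← hnorm, Complex.norm_mul_sin_arg]

lemma sq_add_sq_polar_add_polar (r φ ρ θ : ℝ) :
    (r * cos φ + ρ * cos θ) ^ 2 + (r * sin φ + ρ * sin θ) ^ 2 =
      r ^ 2 + ρ ^ 2 + 2 * r * ρ * cos (θ - φ) := by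
  rw [cos_sub]
  linear_combination r ^ 2 * sin_sq_add_cos_sq φ + ρ ^ 2 * sin_sq_add_cos_sq θ

lemma intervalIntegral_radial_circle (b : ℝ → E) {x₁ x₂ r : ℝ} (hr : r = √(x₁ ^ 2 + x₂ ^ 2))
    (ρ : ℝ) :
    ∫ θ in 0..2 * π, b √((x₁ + ρ * cos θ) ^ 2 + (x₂ + ρ * sin θ) ^ 2) =
      (2 : ℝ) • ∫ t in 0..π, b √(r ^ 2 + ρ ^ 2 + 2 * r * ρ * cos t) := by
  obtain ⟨φ, hx₁, hx₂⟩ := exists_eq_sqrt_mul_cos_sin x₁ x₂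
  rw [← hr] at hx₁ hx₂
  simp only [hx₁, hx₂, sq_add_sq_polar_add_polar]
  exact intervalIntegral_comp_cos_sub (fun c ↦ b √(r ^ 2 + ρ ^ 2 + 2 * r * ρ * c)) φ

end CircleIntegral

section AngleSubstitution

open Real Set

/-- The cosine of the angle between `x` and `ω` for which `|x + ρω| = lam`, where `|x| = r` and
`|ω| = 1`, as given by the law of cosines. -/
def cosOfDist (ρ r lam : ℝ) : ℝ :=
  (lam ^ 2 - ρ ^ 2 - r ^ 2) / (2 * ρ * r)

/-- The angle in `[0, π]` between `x` and `ω` for which `|x + ρω| = lam`, where `|x| = r` and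
`|ω| = 1`. It is meaningful for `|ρ - r| ≤ lam ≤ ρ + r`; as `arccos` is constant outside `[-1, 1]`,
it is `0` for larger and `π` for smaller nonnegative `lam`. -/
def angleOfDist (ρ r lam : ℝ) : ℝ :=
  arccos (cosOfDist ρ r lam)

variable {ρ r lam : ℝ}

lemma hker_eq_of_mem_Ioo (hlam : lam ∈ Ioo |ρ - r| (ρ + r)) :
    hker lam ρ r = (√((lam + r) ^ 2 - ρ ^ 2))⁻¹ * (√(ρ ^ 2 - (lam - r) ^ 2))⁻¹ := by
  obtain ⟨hleft, hright⟩ := abs_lt.1 hlam.1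
  have hupper : lam < ρ + r := hlam.2
  rw [hker, ← mul_inv, ← mul_inv, ← sqrt_mul (by nlinarith), ← sqrt_mul (by nlinarith)]
  congr 2
  ring

lemma hasDerivAt_cosOfDist (ρ r lam : ℝ) :
    HasDerivAt (cosOfDist ρ r) (lam / (ρ * r)) lam := by
  convert! (((hasDerivAt_pow 2 lam).sub_const (ρ ^ 2)).sub_const (r ^ 2)).div_const (2 * ρ * r)
    using 1
  push_cast
  ring

lemma one_add_cosOfDist (hρ : ρ ≠ 0) (hr : r ≠ 0) :
    1 + cosOfDist ρ r lam = (lam ^ 2 - (ρ - r) ^ 2) / (2 * ρ * r) := by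
  rw [cosOfDist]
  field_simp
  ring

lemma one_sub_cosOfDist (hρ : ρ ≠ 0) (hr : r ≠ 0) :
    1 - cosOfDist ρ r lam = ((ρ + r) ^ 2 - lam ^ 2) / (2 * ρ * r) := by
  rw [cosOfDist]
  field_simp
  ring

lemma cosOfDist_abs_sub (hρ : ρ ≠ 0) (hr : r ≠ 0) : cosOfDist ρ r |ρ - r| = -1 := by
  have h := one_add_cosOfDist (lam := |ρ - r|) hρ hr
  rw [sq_abs, sub_self, zero_div] at h
  linarith

lemma cosOfDist_add (hρ : ρ ≠ 0) (hr : r ≠ 0) : cosOfDist ρ r (ρ + r) = 1 := by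
  have h := one_sub_cosOfDist (lam := ρ + r) hρ hr
  rw [sub_self, zero_div] at h
  linarith

lemma strictMonoOn_cosOfDist (hρ : 0 < ρ) (hr : 0 < r) :
    StrictMonoOn (cosOfDist ρ r) (Ici 0) := by
  intro lam hlam mu _ hlt
  have hlam : 0 ≤ lam := hlam
  unfold cosOfDist
  gcongr

lemma cosOfDist_mem_Icc (hρ : 0 < ρ) (hr : 0 < r) (hlam : lam ∈ Icc |ρ - r| (ρ + r)) :
    cosOfDist ρ r lam ∈ Icc (-1) 1 := by
  have hmono : StrictMonoOn (cosOfDist ρ r) (Icc |ρ - r| (ρ + r)) :=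
    (strictMonoOn_cosOfDist hρ hr).mono fun _ h ↦ (abs_nonneg _).trans h.1
  simpa only [cosOfDist_abs_sub hρ.ne' hr.ne', cosOfDist_add hρ.ne' hr.ne'] using
    hmono.monotoneOn.mapsTo_Icc hlam

lemma cosOfDist_mem_Ioo (hρ : 0 < ρ) (hr : 0 < r) (hlam : lam ∈ Ioo |ρ - r| (ρ + r)) :
    cosOfDist ρ r lam ∈ Ioo (-1) 1 := by
  have hmono : StrictMonoOn (cosOfDist ρ r) (Icc |ρ - r| (ρ + r)) :=
    (strictMonoOn_cosOfDist hρ hr).mono fun _ h ↦ (abs_nonneg _).trans h.1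
  simpa only [cosOfDist_abs_sub hρ.ne' hr.ne', cosOfDist_add hρ.ne' hr.ne'] using
    hmono.mapsTo_Ioo hlam

lemma inv_sqrt_one_sub_cosOfDist_sq (hρ : 0 < ρ) (hr : 0 < r) (hlam : |ρ - r| ≤ lam) :
    (√(1 - cosOfDist ρ r lam ^ 2))⁻¹ = 2 * ρ * r * hker lam ρ r := by
  have hnonneg : 0 ≤ lam ^ 2 - (ρ - r) ^ 2 :=
    sub_nonneg.2 (sq_le_sq.2 (hlam.trans (le_abs_self lam)))
  have hfactor : 1 - cosOfDist ρ r lam ^ 2 =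
      (lam ^ 2 - (ρ - r) ^ 2) * ((ρ + r) ^ 2 - lam ^ 2) / (2 * ρ * r) ^ 2 := by
    rw [← one_pow 2, sq_sub_sq, one_add_cosOfDist hρ.ne' hr.ne', one_sub_cosOfDist hρ.ne' hr.ne',
      div_mul_div_comm, ← sq]
  rw [hfactor, sqrt_div' _ (sq_nonneg _), sqrt_sq (by positivity), sqrt_mul hnonneg, inv_div,
    div_eq_mul_inv, mul_inv, hker]

lemma sqrt_add_mul_cos_angleOfDist (hρ : 0 < ρ) (hr : 0 < r)
    (hlam : lam ∈ Icc |ρ - r| (ρ + r)) :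
    √(r ^ 2 + ρ ^ 2 + 2 * r * ρ * cos (angleOfDist ρ r lam)) = lam := by
  obtain ⟨hneg_one, hone⟩ := cosOfDist_mem_Icc hρ hr hlam
  have hsq : r ^ 2 + ρ ^ 2 + 2 * r * ρ * cosOfDist ρ r lam = lam ^ 2 := by
    rw [cosOfDist]
    field_simp
    ring
  rw [angleOfDist, cos_arccos hneg_one hone, hsq, sqrt_sq ((abs_nonneg _).trans hlam.1)]

lemma hasDerivAt_angleOfDist (hρ : 0 < ρ) (hr : 0 < r) (hlam : lam ∈ Ioo |ρ - r| (ρ + r)) :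
    HasDerivAt (angleOfDist ρ r) (-(2 * (lam * hker lam ρ r))) lam := by
  obtain ⟨hneg_one, hone⟩ := cosOfDist_mem_Ioo hρ hr hlam
  convert! (hasDerivAt_arccos hneg_one.ne' hone.ne).comp lam (hasDerivAt_cosOfDist ρ r lam) using 1
  rw [one_div, inv_sqrt_one_sub_cosOfDist_sq hρ hr hlam.1.le]
  field_simp

lemma continuous_angleOfDist (ρ r : ℝ) : Continuous (angleOfDist ρ r) := by
  unfold angleOfDist cosOfDist
  fun_prop

variable {E : Type*} [NormedAddCommGroup E] [NormedSpace ℝ E]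

lemma intervalIntegral_comp_angleOfDist (g : ℝ → E) (hρ : 0 < ρ) (hr : 0 < r) :
    ∫ t in 0..π, g t =
      (2 : ℝ) • ∫ lam in |ρ - r|..(ρ + r), (lam * hker lam ρ r) • g (angleOfDist ρ r lam) := by
  have hle : |ρ - r| ≤ ρ + r := abs_le.2 ⟨by linarith, by linarith⟩
  have hsubst := intervalIntegral.integral_deriv_smul_comp_of_deriv_nonpos
    (a := |ρ - r|) (b := ρ + r) (f' := fun lam ↦ -(2 * (lam * hker lam ρ r))) (g := g)
    (continuous_angleOfDist ρ r).continuousOn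
    (fun lam hlam ↦ hasDerivAt_angleOfDist hρ hr (by simpa [hle] using hlam))
    (fun lam hlam ↦ by
      have hlam₀ : 0 ≤ lam := (abs_nonneg (ρ - r)).trans (by simpa [hle] using hlam.1.le)
      have hker_nonneg : 0 ≤ hker lam ρ r := by unfold hker; positivity
      exact neg_nonpos.2 (by positivity))
  rw [angleOfDist, angleOfDist, cosOfDist_abs_sub hρ.ne' hr.ne', cosOfDist_add hρ.ne' hr.ne',
    arccos_neg_one, arccos_one, intervalIntegral.integral_symm 0 π] at hsubst
  simpa only [neg_smul, mul_smul, intervalIntegral.integral_neg, intervalIntegral.integral_smul,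
    neg_inj, Function.comp_apply] using hsubst.symm

lemma intervalIntegral_comp_sqrt_add_mul_cos (b : ℝ → E) (hρ : 0 < ρ) (hr : 0 < r) :
    ∫ t in 0..π, b √(r ^ 2 + ρ ^ 2 + 2 * r * ρ * cos t) =
      (2 : ℝ) • ∫ lam in |ρ - r|..(ρ + r), (lam * hker lam ρ r) • b lam := by
  have hle : |ρ - r| ≤ ρ + r := abs_le.2 ⟨by linarith, by linarith⟩
  rw [intervalIntegral_comp_angleOfDist _ hρ hr]
  congr 1
  refine intervalIntegral.integral_congr fun lam hlam ↦ ?_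
  rw [uIcc_of_le hle] at hlam
  simp only [sqrt_add_mul_cos_angleOfDist hρ hr hlam]

end AngleSubstitution

theorem stmt7_general {E : Type*} [NormedAddCommGroup E] [NormedSpace ℝ E] (b : ℝ → E)
    (x₁ x₂ ρ r : ℝ) (hr : r = √(x₁ ^ 2 + x₂ ^ 2)) (hr0 : 0 < r) (hρ : 0 < ρ) :
    ∫ θ in 0..2 * Real.pi, b √((x₁ + ρ * Real.cos θ) ^ 2 + (x₂ + ρ * Real.sin θ) ^ 2) =
        (4 : ℝ) • ∫ lam in |ρ - r|..(ρ + r), (lam * hker lam ρ r) • b lam ∧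
      ∀ lam : ℝ, |ρ - r| < lam → lam < ρ + r →
        hker lam ρ r = (√((lam + r) ^ 2 - ρ ^ 2))⁻¹ * (√(ρ ^ 2 - (lam - r) ^ 2))⁻¹ := by
  refine ⟨?_, fun lam hlower hupper ↦ hker_eq_of_mem_Ioo ⟨hlower, hupper⟩⟩
  rw [intervalIntegral_radial_circle b hr ρ, intervalIntegral_comp_sqrt_add_mul_cos b hρ hr0,
    smul_smul]
  norm_num

/-- The spherical-means lemma (Lemma `moysp` of the paper): change of variables for
averages of a radial function over a circle of radius `ρ` centered at `x`, together
with the algebraic identity for the kernel `h`. -/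
theorem stmt7 (b : ℝ → ℝ) (hb : ContinuousOn b (Set.Ici 0))
    (x₁ x₂ ρ r : ℝ) (hr : r = Real.sqrt (x₁^2 + x₂^2)) (hr0 : 0 < r) (hρ : 0 < ρ) :
    (∫ θ in (0:ℝ)..(2 * Real.pi),
        b (Real.sqrt ((x₁ + ρ * Real.cos θ)^2 + (x₂ + ρ * Real.sin θ)^2)))
      = 4 * ∫ lam in (|ρ - r|)..(ρ + r), lam * b lam * hker lam ρ r
    ∧ ∀ lam : ℝ, |ρ - r| < lam → lam < ρ + r →
        hker lam ρ r =
          (Real.sqrt ((lam + r)^2 - ρ^2))⁻¹ * (Real.sqrt (ρ^2 - (lam - r)^2))⁻¹ := by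
  simpa only [smul_eq_mul, mul_right_comm] using stmt7_general b x₁ x₂ ρ r hr hr0 hρ
end
end

section
/- Let ν > 1. Then there is a constant C = C(ν) such that for every T > 0 and every σ with −T ≤ σ ≤ T: ∫_{−T}^{σ} (T−α)^{−1/2} (1+|α|)^{−ν} dα ≤ C T^{−1/2}. -/
open MeasureTheory

noncomputable section

/-!
Split the range of integration at `α = T / 2`. To the left of it the kernel `(T - α) ^ (-s)` is at
most `(T / 2) ^ (-s)` and the weight is integrable. To the right of it the weight is at most
`2 / T`, and the integral `(T / 2) ^ (1 - s) / (1 - s)` of the kernel compensates this factor.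
-/

open Set

section Kernel

variable {s c T : ℝ}

lemma integrableOn_Ioc_sub_rpow_neg (hs : s < 1) (hcT : c ≤ T) :
    IntegrableOn (fun α : ℝ => (T - α) ^ (-s)) (Ioc c T) := by
  rw [← intervalIntegrable_iff_integrableOn_Ioc_of_le hcT]
  have h := (intervalIntegral.intervalIntegrable_rpow' (a := T - c) (b := 0)
    (neg_lt_neg hs)).comp_sub_left T
  simpa only [sub_sub_cancel, sub_zero] using h

lemma integral_Ioc_sub_rpow_neg (hs : s < 1) (hcT : c ≤ T) :
    ∫ α in Ioc c T, (T - α) ^ (-s) = (T - c) ^ (1 - s) / (1 - s) := by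
  rw [← intervalIntegral.integral_of_le hcT,
    intervalIntegral.integral_comp_sub_left (fun x => x ^ (-s)) T,
    integral_rpow (Or.inl (neg_lt_neg hs)), sub_self, neg_add_eq_sub,
    Real.zero_rpow (sub_pos.2 hs).ne', sub_zero]

end Kernel

section WeightedIntegral

variable {s c T B M : ℝ} {w : ℝ → ℝ}

lemma sub_rpow_neg_mul_nonneg {α y : ℝ} (hy : 0 ≤ y) (hα : α ≤ T) : 0 ≤ (T - α) ^ (-s) * y :=
  mul_nonneg (Real.rpow_nonneg (sub_nonneg.2 hα) _) hy

lemma sub_rpow_neg_mul_le_mul_right {α y : ℝ} (hs : 0 ≤ s) (hcT : c < T) (hy : 0 ≤ y)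
    (hα : α ≤ c) : (T - α) ^ (-s) * y ≤ (T - c) ^ (-s) * y :=
  mul_le_mul_of_nonneg_right (Real.rpow_le_rpow_of_nonpos (sub_pos.2 hcT)
    (sub_le_sub_left hα T) (neg_nonpos.2 hs)) hy

lemma sub_rpow_neg_mul_le_mul_left {α y : ℝ} (hα : α ≤ T) (hy : y ≤ B) :
    (T - α) ^ (-s) * y ≤ (T - α) ^ (-s) * B :=
  mul_le_mul_of_nonneg_left hy (Real.rpow_nonneg (sub_nonneg.2 hα) _)

lemma aestronglyMeasurable_sub_rpow_neg_mul {μ : Measure ℝ} (hw : AEStronglyMeasurable w μ) :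
    AEStronglyMeasurable (fun α => (T - α) ^ (-s) * w α) μ :=
  ((measurable_const.sub measurable_id).pow_const (-s)).aestronglyMeasurable.mul hw

lemma integrableOn_Iic_sub_rpow_neg_mul (hs : 0 ≤ s) (hcT : c < T) (hw : ∀ α ≤ c, 0 ≤ w α)
    (hint : IntegrableOn w (Iic c)) :
    IntegrableOn (fun α => (T - α) ^ (-s) * w α) (Iic c) := by
  refine (hint.const_mul ((T - c) ^ (-s))).mono'
    (aestronglyMeasurable_sub_rpow_neg_mul hint.aestronglyMeasurable) ?_
  filter_upwards [ae_restrict_mem measurableSet_Iic] with α hα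
  rw [Real.norm_of_nonneg (sub_rpow_neg_mul_nonneg (hw α hα) (hα.trans hcT.le))]
  exact sub_rpow_neg_mul_le_mul_right hs hcT (hw α hα) hα

lemma integral_Iic_sub_rpow_neg_mul_le (hs : 0 ≤ s) (hcT : c < T) (hw : ∀ α ≤ c, 0 ≤ w α)
    (hint : IntegrableOn w (Iic c)) :
    ∫ α in Iic c, (T - α) ^ (-s) * w α ≤ (T - c) ^ (-s) * ∫ α in Iic c, w α := by
  rw [← integral_const_mul]
  exact setIntegral_mono_on (integrableOn_Iic_sub_rpow_neg_mul hs hcT hw hint)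
    (hint.const_mul _) measurableSet_Iic
    fun α hα => sub_rpow_neg_mul_le_mul_right hs hcT (hw α hα) hα

lemma integrableOn_Ioc_sub_rpow_neg_mul (hs : s < 1) (hcT : c ≤ T)
    (hw : ∀ α ∈ Ioc c T, 0 ≤ w α)
    (hmeas : AEStronglyMeasurable w (volume.restrict (Ioc c T)))
    (hB : ∀ α ∈ Ioc c T, w α ≤ B) :
    IntegrableOn (fun α => (T - α) ^ (-s) * w α) (Ioc c T) := by
  refine ((integrableOn_Ioc_sub_rpow_neg hs hcT).mul_const B).mono'
    (aestronglyMeasurable_sub_rpow_neg_mul hmeas) ?_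
  filter_upwards [ae_restrict_mem measurableSet_Ioc] with α hα
  rw [Real.norm_of_nonneg (sub_rpow_neg_mul_nonneg (hw α hα) hα.2)]
  exact sub_rpow_neg_mul_le_mul_left hα.2 (hB α hα)

lemma integral_Ioc_sub_rpow_neg_mul_le (hs : s < 1) (hcT : c ≤ T)
    (hw : ∀ α ∈ Ioc c T, 0 ≤ w α)
    (hmeas : AEStronglyMeasurable w (volume.restrict (Ioc c T)))
    (hB : ∀ α ∈ Ioc c T, w α ≤ B) :
    ∫ α in Ioc c T, (T - α) ^ (-s) * w α ≤ (T - c) ^ (1 - s) / (1 - s) * B := by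
  rw [← integral_Ioc_sub_rpow_neg hs hcT, ← integral_mul_const]
  exact setIntegral_mono_on (integrableOn_Ioc_sub_rpow_neg_mul hs hcT hw hmeas hB)
    ((integrableOn_Ioc_sub_rpow_neg hs hcT).mul_const B) measurableSet_Ioc
    fun α hα => sub_rpow_neg_mul_le_mul_left hα.2 (hB α hα)

theorem integrableOn_and_integral_Iic_sub_rpow_neg_mul_le (hs₀ : 0 ≤ s) (hs₁ : s < 1)
    (hT : 0 < T) (hw : ∀ α, 0 ≤ w α) (hint : Integrable w)
    (hdecay : ∀ α, 0 < α → w α ≤ M / α) :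
    IntegrableOn (fun α => (T - α) ^ (-s) * w α) (Iic T) ∧
      ∫ α in Iic T, (T - α) ^ (-s) * w α ≤ (T / 2) ^ (-s) * ((∫ α, w α) + M / (1 - s)) := by
  have hM : 0 ≤ M := by simpa only [div_one] using (hw 1).trans (hdecay 1 one_pos)
  have hT2 : 0 < T / 2 := half_pos hT
  have hlt : T / 2 < T := half_lt_self hT
  have hB : ∀ α ∈ Ioc (T / 2) T, w α ≤ M / (T / 2) := fun α hα =>
    (hdecay α (hT2.trans hα.1)).trans (div_le_div_of_nonneg_left hM hT2 hα.1.le)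
  have hleft := integrableOn_Iic_sub_rpow_neg_mul hs₀ hlt (fun α _ => hw α) hint.integrableOn
  have hright := integrableOn_Ioc_sub_rpow_neg_mul hs₁ hlt.le (fun α _ => hw α)
    hint.aestronglyMeasurable.restrict hB
  rw [← Iic_union_Ioc_eq_Iic hlt.le]
  refine ⟨hleft.union hright, ?_⟩
  rw [setIntegral_union (Iic_disjoint_Ioc le_rfl) measurableSet_Ioc hleft hright]
  calc
    _ ≤ (T - T / 2) ^ (-s) * (∫ α in Iic (T / 2), w α)
        + (T - T / 2) ^ (1 - s) / (1 - s) * (M / (T / 2)) :=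
      add_le_add
        (integral_Iic_sub_rpow_neg_mul_le hs₀ hlt (fun α _ => hw α) hint.integrableOn)
        (integral_Ioc_sub_rpow_neg_mul_le hs₁ hlt.le (fun α _ => hw α)
          hint.aestronglyMeasurable.restrict hB)
    _ = (T / 2) ^ (-s) * ((∫ α in Iic (T / 2), w α) + M / (1 - s)) := by
      rw [sub_half, sub_eq_neg_add 1 s, Real.rpow_add_one hT2.ne']
      field_simp
    _ ≤ (T / 2) ^ (-s) * ((∫ α, w α) + M / (1 - s)) := by
      gcongr
      · exact .of_forall hw
      · exact Measure.restrict_le_self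

end WeightedIntegral

lemma one_add_abs_rpow_neg_le_one_div {ν α : ℝ} (hν : 1 ≤ ν) (hα : 0 < α) :
    (1 + |α|) ^ (-ν) ≤ 1 / α :=
  calc
    (1 + |α|) ^ (-ν) ≤ (1 + |α|) ^ (-1 : ℝ) :=
      Real.rpow_le_rpow_of_exponent_le (le_add_of_nonneg_right (abs_nonneg α)) (neg_le_neg hν)
    _ = 1 / (1 + |α|) := by rw [Real.rpow_neg_one, one_div]
    _ ≤ 1 / α := one_div_le_one_div_of_le hα (by linarith [le_abs_self α])

theorem stmt17_general {s ν : ℝ} (hs₀ : 0 ≤ s) (hs₁ : s < 1) (hν : 1 < ν) :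
    ∃ C : ℝ, 0 < C ∧ ∀ T a b : ℝ, 0 < T → a ≤ b → b ≤ T →
      IntervalIntegrable (fun α => (T - α) ^ (-s) * (1 + |α|) ^ (-ν)) volume a b ∧
        ∫ α in a..b, (T - α) ^ (-s) * (1 + |α|) ^ (-ν) ≤ C * T ^ (-s) := by
  have hw : ∀ α : ℝ, 0 ≤ (1 + |α|) ^ (-ν) := fun α => by positivity
  have hint : Integrable fun α : ℝ => (1 + |α|) ^ (-ν) := by
    simpa only [Real.norm_eq_abs] using
      integrable_one_add_norm (E := ℝ) (μ := volume) (r := ν) (by simpa using hν)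
  have hpos : 0 < (∫ α : ℝ, (1 + |α|) ^ (-ν)) + 1 / (1 - s) :=
    add_pos_of_nonneg_of_pos (integral_nonneg hw) (one_div_pos.2 (sub_pos.2 hs₁))
  refine ⟨2 ^ s * ((∫ α : ℝ, (1 + |α|) ^ (-ν)) + 1 / (1 - s)),
    mul_pos (Real.rpow_pos_of_pos two_pos s) hpos, ?_⟩
  intro T a b hT hab hbT
  obtain ⟨hintT, hle⟩ := integrableOn_and_integral_Iic_sub_rpow_neg_mul_le hs₀ hs₁ hT hw hint
    (fun _ => one_add_abs_rpow_neg_le_one_div hν.le)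
  have hsub : Ioc a b ⊆ Iic T := fun α hα => hα.2.trans hbT
  rw [intervalIntegrable_iff_integrableOn_Ioc_of_le hab, intervalIntegral.integral_of_le hab]
  refine ⟨hintT.mono_set hsub, ?_⟩
  calc
    _ ≤ ∫ α in Iic T, (T - α) ^ (-s) * (1 + |α|) ^ (-ν) := by
      refine setIntegral_mono_set hintT ?_ hsub.eventuallyLE
      filter_upwards [ae_restrict_mem measurableSet_Iic] with α hα
      exact sub_rpow_neg_mul_nonneg (hw α) hα
    _ ≤ (T / 2) ^ (-s) * ((∫ α : ℝ, (1 + |α|) ^ (-ν)) + 1 / (1 - s)) := hle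
    _ = _ := by
      rw [Real.div_rpow hT.le zero_le_two, Real.rpow_neg zero_le_two, div_inv_eq_mul]
      ring

lemma inv_sqrt_eq_rpow_neg_half (x : ℝ) : (√x)⁻¹ = x ^ (-(1 / 2) : ℝ) := by
  rw [← Real.sqrt_inv, Real.sqrt_eq_rpow, Real.rpow_neg_eq_inv_rpow]

/-- One-dimensional integral estimate for the 'second factor' in the proof of the
L∞–L∞ estimate for the 2+1-dimensional wave equation. -/
theorem stmt17 (ν : ℝ) (hν : 1 < ν) :
    ∃ C : ℝ, 0 < C ∧
      ∀ T σ : ℝ, 0 < T → -T ≤ σ → σ ≤ T →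
        ∫ α in (-T)..σ, (Real.sqrt (T - α))⁻¹ * (1 + |α|) ^ (-ν)
          ≤ C * T ^ (-(1/2) : ℝ) := by
  obtain ⟨C, hC, hle⟩ := stmt17_general (s := 1 / 2) (by norm_num) (by norm_num) hν
  refine ⟨C, hC, fun T σ hT hTσ hσT => ?_⟩
  simpa only [inv_sqrt_eq_rpow_neg_half] using (hle T (-T) σ hT hTσ hσT).2
end
end

section
/- Let μ > 3/2. Then there is a constant C = C(μ) such that for every T ≥ 1: ∫₀^T β (T−β)^{−1/2} (1+β)^{−μ} dβ ≤ C T^{−1/2} E_μ(T), where E_μ(T) = T^{2−μ} if 3/2 < μ < 2, E_μ(T) = log(1+T) if μ = 2, and E_μ(T) = 1 if μ > 2. -/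
open MeasureTheory

noncomputable section

/-!
The factor `β (1 + β) ^ (-μ)` is at most `(1 + β) ^ (1 - μ)`. On `β ≤ T / 2` the kernel
`(T - β) ^ b` is comparable to `T ^ b`, which leaves `∫ (1 + β) ^ (1 - μ)`; this elementary
integral produces the three regimes of the growth factor. On `β ≥ T / 2` the weight
`(1 + β) ^ (1 - μ)` is comparable to `T ^ (1 - μ)`, which leaves `∫ (T - β) ^ b`, of size
`T ^ (b + 1)`; the resulting `T ^ b * T ^ (2 - μ)` is, up to a constant, no larger than `T ^ b`
times the growth factor.
-/

/-- The growth factor `E_μ(T)`, the convention `T ^ [2 - μ]₊` of the paper: a power of `T` for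
`μ < 2`, a logarithm in the borderline case `μ = 2`, and a constant for `μ > 2`. -/
def growthFactor (μ T : ℝ) : ℝ :=
  if μ = 2 then Real.log (1 + T) else if μ < 2 then T ^ (2 - μ) else 1

lemma growthFactor_two (T : ℝ) : growthFactor 2 T = Real.log (1 + T) :=
  if_pos rfl

lemma growthFactor_of_lt_two {μ : ℝ} (hμ : μ < 2) (T : ℝ) : growthFactor μ T = T ^ (2 - μ) := by
  rw [growthFactor, if_neg hμ.ne, if_pos hμ]

lemma growthFactor_of_two_lt {μ : ℝ} (hμ : 2 < μ) (T : ℝ) : growthFactor μ T = 1 := by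
  rw [growthFactor, if_neg hμ.ne', if_neg hμ.not_gt]

lemma rpow_two_sub_le_two_mul_growthFactor (μ : ℝ) {T : ℝ} (hT : 1 ≤ T) :
    T ^ (2 - μ) ≤ 2 * growthFactor μ T := by
  rcases lt_trichotomy μ 2 with hμ | rfl | hμ
  · rw [growthFactor_of_lt_two hμ]
    exact le_mul_of_one_le_left (by positivity) one_le_two
  · have log_two_le : Real.log 2 ≤ Real.log (1 + T) :=
      Real.log_le_log two_pos (by linarith)
    rw [growthFactor_two, sub_self, Real.rpow_zero]
    linarith [Real.log_two_gt_d9]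
  · rw [growthFactor_of_two_lt hμ]
    linarith [Real.rpow_le_one_of_one_le_of_nonpos hT (sub_nonpos.2 hμ.le)]

lemma inv_sqrt_eq_rpow (x : ℝ) : (Real.sqrt x)⁻¹ = x ^ (-(1 / 2) : ℝ) := by
  rw [Real.rpow_neg_eq_inv_rpow, ← Real.sqrt_eq_rpow, Real.sqrt_inv]

lemma rpow_le_two_rpow_abs_mul_rpow {x y : ℝ} (hy : 0 < y) (hyx : y / 2 ≤ x) (hxy : x ≤ 2 * y)
    (s : ℝ) : x ^ s ≤ 2 ^ |s| * y ^ s := by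
  have hx : 0 < x := (half_pos hy).trans_le hyx
  rcases le_total 0 s with hs | hs
  · calc x ^ s ≤ (2 * y) ^ s := Real.rpow_le_rpow hx.le hxy hs
      _ = 2 ^ |s| * y ^ s := by rw [Real.mul_rpow two_pos.le hy.le, abs_of_nonneg hs]
  · calc x ^ s ≤ (y / 2) ^ s := Real.rpow_le_rpow_of_nonpos (half_pos hy) hyx hs
      _ = 2 ^ |s| * y ^ s := by
        rw [Real.div_rpow hy.le two_pos.le, abs_of_nonpos hs, Real.rpow_neg two_pos.le,
          div_eq_inv_mul]

lemma mul_one_add_rpow_neg_le {β : ℝ} (hβ : 0 ≤ β) (μ : ℝ) :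
    β * (1 + β) ^ (-μ) ≤ (1 + β) ^ (1 - μ) := by
  calc β * (1 + β) ^ (-μ) ≤ (1 + β) * (1 + β) ^ (-μ) := by gcongr; linarith
    _ = (1 + β) ^ (1 - μ) := by
      rw [sub_eq_add_neg, Real.rpow_add (by linarith), Real.rpow_one]

lemma sub_rpow_mul_one_add_rpow_le {T β : ℝ} (hT : 1 ≤ T) (hβ : 0 ≤ β) (hβT : β ≤ T) (b s : ℝ) :
    (T - β) ^ b * (1 + β) ^ s ≤
      2 ^ |b| * T ^ b * (1 + β) ^ s + 2 ^ |s| * T ^ s * (T - β) ^ b := by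
  have kernel_nonneg : 0 ≤ (T - β) ^ b := Real.rpow_nonneg (sub_nonneg.2 hβT) b
  have weight_nonneg : 0 ≤ (1 + β) ^ s := by positivity
  rcases le_total β (T / 2) with near | far
  · have kernel_le : (T - β) ^ b ≤ 2 ^ |b| * T ^ b :=
      rpow_le_two_rpow_abs_mul_rpow (by linarith) (by linarith) (by linarith) b
    exact le_add_of_le_of_nonneg (mul_le_mul_of_nonneg_right kernel_le weight_nonneg)
      (by positivity)
  · have weight_le : (1 + β) ^ s ≤ 2 ^ |s| * T ^ s :=
      rpow_le_two_rpow_abs_mul_rpow (by linarith) (by linarith) (by linarith) s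
    rw [mul_comm ((T - β) ^ b)]
    exact le_add_of_nonneg_of_le (by positivity)
      (mul_le_mul_of_nonneg_right weight_le kernel_nonneg)

lemma continuousOn_one_add_rpow {T : ℝ} (hT : 0 ≤ T) (s : ℝ) :
    ContinuousOn (fun β : ℝ ↦ (1 + β) ^ s) (Set.uIcc 0 T) := by
  rw [Set.uIcc_of_le hT]
  exact ContinuousOn.rpow_const (by fun_prop) fun β hβ ↦ Or.inl (by linarith [hβ.1])

lemma integral_one_add_rpow {T : ℝ} (hT : 0 ≤ T) {s : ℝ} (hs : s ≠ -1) :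
    ∫ β in (0 : ℝ)..T, (1 + β) ^ s = ((1 + T) ^ (s + 1) - 1) / (s + 1) := by
  have zero_notMem : (0 : ℝ) ∉ Set.uIcc 1 (1 + T) :=
    Set.notMem_uIcc_of_lt one_pos (by linarith)
  rw [intervalIntegral.integral_comp_add_left (fun x : ℝ ↦ x ^ s), add_zero,
    integral_rpow (Or.inr ⟨hs, zero_notMem⟩), Real.one_rpow]

lemma integral_one_add_rpow_neg_one {T : ℝ} (hT : 0 ≤ T) :
    ∫ β in (0 : ℝ)..T, (1 + β) ^ (-1 : ℝ) = Real.log (1 + T) := by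
  simp only [Real.rpow_neg_one]
  rw [intervalIntegral.integral_comp_add_left (fun x : ℝ ↦ x⁻¹), add_zero,
    integral_inv_of_pos one_pos (by linarith), div_one]

lemma exists_integral_one_add_rpow_le_mul_growthFactor (μ : ℝ) :
    ∃ K : ℝ, 0 < K ∧ ∀ T : ℝ, 1 ≤ T →
      ∫ β in (0 : ℝ)..T, (1 + β) ^ (1 - μ) ≤ K * growthFactor μ T := by
  have integral_eq (hμ : μ ≠ 2) {T : ℝ} (hT : 1 ≤ T) :
      ∫ β in (0 : ℝ)..T, (1 + β) ^ (1 - μ) = ((1 + T) ^ (2 - μ) - 1) / (2 - μ) := by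
    rw [integral_one_add_rpow (by linarith) fun h ↦ hμ (by linarith),
      show 1 - μ + 1 = 2 - μ by ring]
  rcases lt_trichotomy μ 2 with hμ | rfl | hμ
  · have exponent_pos : 0 < 2 - μ := sub_pos.2 hμ
    refine ⟨2 ^ (2 - μ) / (2 - μ), by positivity, fun T hT ↦ ?_⟩
    calc ∫ β in (0 : ℝ)..T, (1 + β) ^ (1 - μ)
        = ((1 + T) ^ (2 - μ) - 1) / (2 - μ) := integral_eq hμ.ne hT
      _ ≤ (2 * T) ^ (2 - μ) / (2 - μ) := by
        gcongr
        exact (sub_le_self _ zero_le_one).trans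
          (Real.rpow_le_rpow (by linarith) (by linarith) exponent_pos.le)
      _ = 2 ^ (2 - μ) / (2 - μ) * growthFactor μ T := by
        rw [growthFactor_of_lt_two hμ, Real.mul_rpow two_pos.le (by linarith), div_mul_eq_mul_div]
  · refine ⟨1, one_pos, fun T hT ↦ ?_⟩
    rw [show (1 : ℝ) - 2 = -1 by norm_num, integral_one_add_rpow_neg_one (by linarith),
      growthFactor_two, one_mul]
  · have exponent_pos : 0 < μ - 2 := sub_pos.2 hμ
    refine ⟨1 / (μ - 2), one_div_pos.2 exponent_pos, fun T hT ↦ ?_⟩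
    calc ∫ β in (0 : ℝ)..T, (1 + β) ^ (1 - μ)
        = (1 - (1 + T) ^ (2 - μ)) / (μ - 2) := by
          rw [integral_eq hμ.ne' hT, ← neg_div_neg_eq, neg_sub, neg_sub]
      _ ≤ 1 / (μ - 2) := by
        gcongr
        exact sub_le_self _ (by positivity)
      _ = 1 / (μ - 2) * growthFactor μ T := by rw [growthFactor_of_two_lt hμ, mul_one]

lemma intervalIntegrable_sub_rpow {b : ℝ} (hb : -1 < b) (T : ℝ) :
    IntervalIntegrable (fun β : ℝ ↦ (T - β) ^ b) volume 0 T := by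
  simpa only [sub_self, sub_zero] using
    (intervalIntegral.intervalIntegrable_rpow' (a := T) (b := 0) hb).comp_sub_left T

lemma integral_sub_rpow {b : ℝ} (hb : -1 < b) (T : ℝ) :
    ∫ β in (0 : ℝ)..T, (T - β) ^ b = T ^ (b + 1) / (b + 1) := by
  rw [intervalIntegral.integral_comp_sub_left (fun x : ℝ ↦ x ^ b), sub_self, sub_zero,
    integral_rpow (Or.inl hb), Real.zero_rpow (by linarith), sub_zero]

lemma integral_sub_rpow_mul_one_add_rpow_le {b T : ℝ} (hb : -1 < b) (hT : 1 ≤ T) (s : ℝ) :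
    ∫ β in (0 : ℝ)..T, (T - β) ^ b * (1 + β) ^ s ≤
      2 ^ |b| * T ^ b * (∫ β in (0 : ℝ)..T, (1 + β) ^ s) +
        2 ^ |s| * T ^ s * (T ^ (b + 1) / (b + 1)) := by
  have hT₀ : 0 ≤ T := zero_le_one.trans hT
  have kernel_integrable := intervalIntegrable_sub_rpow hb T
  have weight_continuousOn := continuousOn_one_add_rpow hT₀ s
  have near_integrable :=
    (weight_continuousOn.intervalIntegrable (μ := volume)).const_mul (2 ^ |b| * T ^ b)
  have far_integrable := kernel_integrable.const_mul (2 ^ |s| * T ^ s)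
  rw [← integral_sub_rpow hb T, ← intervalIntegral.integral_const_mul,
    ← intervalIntegral.integral_const_mul,
    ← intervalIntegral.integral_add near_integrable far_integrable]
  exact intervalIntegral.integral_mono_on hT₀
    (kernel_integrable.mul_continuousOn weight_continuousOn)
    (near_integrable.add far_integrable)
    fun β hβ ↦ sub_rpow_mul_one_add_rpow_le hT hβ.1 hβ.2 b s

lemma integral_mul_sub_rpow_mul_one_add_rpow_neg_le {b T : ℝ} (hb : -1 < b) (hT : 0 ≤ T)
    (μ : ℝ) :
    ∫ β in (0 : ℝ)..T, β * (T - β) ^ b * (1 + β) ^ (-μ) ≤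
      ∫ β in (0 : ℝ)..T, (T - β) ^ b * (1 + β) ^ (1 - μ) := by
  have kernel_integrable := intervalIntegrable_sub_rpow hb T
  refine intervalIntegral.integral_mono_on hT
    ((kernel_integrable.continuousOn_mul continuousOn_id).mul_continuousOn
      (continuousOn_one_add_rpow hT (-μ)))
    (kernel_integrable.mul_continuousOn (continuousOn_one_add_rpow hT (1 - μ)))
    fun β hβ ↦ ?_
  rw [mul_comm β, mul_assoc]
  exact mul_le_mul_of_nonneg_left (mul_one_add_rpow_neg_le hβ.1 μ)
    (Real.rpow_nonneg (sub_nonneg.2 hβ.2) b)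

theorem stmt18_general {b : ℝ} (hb : -1 < b) (μ : ℝ) :
    ∃ C : ℝ, 0 < C ∧ ∀ T : ℝ, 1 ≤ T →
      ∫ β in (0 : ℝ)..T, β * (T - β) ^ b * (1 + β) ^ (-μ) ≤ C * T ^ b * growthFactor μ T := by
  obtain ⟨K, hK, integral_le⟩ := exists_integral_one_add_rpow_le_mul_growthFactor μ
  have hb₁ : 0 < b + 1 := by linarith
  refine ⟨2 ^ |b| * K + 2 ^ |1 - μ| * 2 / (b + 1), by positivity, fun T hT ↦ ?_⟩
  have hT₀ : 0 < T := one_pos.trans_le hT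
  have rpow_mul_rpow : T ^ (1 - μ) * T ^ (b + 1) = T ^ b * T ^ (2 - μ) := by
    rw [← Real.rpow_add hT₀, ← Real.rpow_add hT₀]
    ring_nf
  calc ∫ β in (0 : ℝ)..T, β * (T - β) ^ b * (1 + β) ^ (-μ)
      ≤ ∫ β in (0 : ℝ)..T, (T - β) ^ b * (1 + β) ^ (1 - μ) :=
        integral_mul_sub_rpow_mul_one_add_rpow_neg_le hb hT₀.le μ
    _ ≤ 2 ^ |b| * T ^ b * (∫ β in (0 : ℝ)..T, (1 + β) ^ (1 - μ)) +
          2 ^ |1 - μ| * T ^ (1 - μ) * (T ^ (b + 1) / (b + 1)) :=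
        integral_sub_rpow_mul_one_add_rpow_le hb hT (1 - μ)
    _ = 2 ^ |b| * T ^ b * (∫ β in (0 : ℝ)..T, (1 + β) ^ (1 - μ)) +
          2 ^ |1 - μ| / (b + 1) * T ^ b * T ^ (2 - μ) := by
        linear_combination 2 ^ |1 - μ| / (b + 1) * rpow_mul_rpow
    _ ≤ 2 ^ |b| * T ^ b * (K * growthFactor μ T) +
          2 ^ |1 - μ| / (b + 1) * T ^ b * (2 * growthFactor μ T) := by
        gcongr
        · exact integral_le T hT
        · exact rpow_two_sub_le_two_mul_growthFactor μ hT
    _ = (2 ^ |b| * K + 2 ^ |1 - μ| * 2 / (b + 1)) * T ^ b * growthFactor μ T := by ring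

/-- One-dimensional integral estimate for the 'first factor' in the bound of the piece
`I₁` in the proof of the L∞–L∞ estimate for the 2+1-dimensional wave equation. -/
theorem stmt18 (μ : ℝ) (hμ : 3/2 < μ) :
    ∃ C : ℝ, 0 < C ∧
      ∀ T : ℝ, 1 ≤ T →
        ∫ β in (0:ℝ)..T, β * (Real.sqrt (T - β))⁻¹ * (1 + β) ^ (-μ)
          ≤ C * T ^ (-(1/2) : ℝ) *
              (if μ = 2 then Real.log (1 + T)
               else if μ < 2 then T ^ (2 - μ) else 1) := by
  simpa only [inv_sqrt_eq_rpow, growthFactor] using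
    stmt18_general (b := -(1 / 2)) (by norm_num) μ
end
end
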